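/- OSSS inequality for monotonic measures (Duminil-Copin–Raoufi–Tassion): Let μ be a monotonic probability measure on {0,1}^n with 0 < μ[ω_i = 1] < 1 for every i, let f : {0,1}^n → {0,1} be an increasing boolean function, and let T be any algorithm (decision tree) on {0,1}^n. Then Var_μ(f) ≤ Σ_{i=1}^n δ_i(T) · Inf_i^μ(f), where δ_i(T) := μ[∃ t ≤ τ(ω) : i_t(ω) = i] is the revealment of coordinate i under μ. -/

import Mathlib

open scoped Classical

section MonotonicMeasures

variable {ι : Type*} [Fintype ι] [DecidableEq ι]

/-- A probability measure `μ` on the finite set `{0,1}^ι`, given by its weight function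
`w`: all weights are nonnegative and they sum to `1`. -/
def IsProbWeight (w : (ι → Bool) → ℝ) : Prop :=
  (∀ ω, 0 ≤ w ω) ∧ ∑ ω : ι → Bool, w ω = 1

/-- The probability `μ[A]` of an event `A ⊆ {0,1}^ι` under the measure with weights `w`. -/
noncomputable def wProb (w : (ι → Bool) → ℝ) (A : (ι → Bool) → Prop) : ℝ :=
  ∑ ω : ι → Bool, w ω * (if A ω then 1 else 0)

/-- The expectation `μ[g]` of `g : {0,1}^ι → ℝ` under the measure with weights `w`. -/
noncomputable def wExp (w : (ι → Bool) → ℝ) (g : (ι → Bool) → ℝ) : ℝ :=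
  ∑ ω : ι → Bool, w ω * g ω

/-- The variance `Var_μ(g)` of `g : {0,1}^ι → ℝ` under the measure with weights `w`. -/
noncomputable def wVar (w : (ι → Bool) → ℝ) (g : (ι → Bool) → ℝ) : ℝ :=
  wExp w (fun ω => (g ω - wExp w g) ^ 2)

/-- The `{0,1}`-valued (real) indicator of a boolean function. -/
noncomputable def boolInd (f : (ι → Bool) → Bool) (ω : ι → Bool) : ℝ :=
  if f ω then 1 else 0

/-- The real-valued coordinate function `ω ↦ ω_i`. -/
noncomputable def coordFun (i : ι) (ω : ι → Bool) : ℝ := if ω i then 1 else 0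

/-- The cylinder event `{ω : ω_i = ξ_i for all i ∈ F}`. -/
def agreesOn (F : Finset ι) (ξ : ι → Bool) (ω : ι → Bool) : Prop :=
  ∀ i ∈ F, ω i = ξ i

/-- A measure `μ` (with weights `w`) on `{0,1}^ι` is monotonic if, for every coordinate
`e`, every `F ⊆ ι` and all `ξ ≤ ζ` in `{0,1}^F` whose cylinders have positive
probability, `μ[ω_e = 1 | ω ≡ ξ on F] ≤ μ[ω_e = 1 | ω ≡ ζ on F]`. -/
def IsMonotonic (w : (ι → Bool) → ℝ) : Prop :=
  ∀ (e : ι) (F : Finset ι) (ξ ζ : ι → Bool), (∀ i ∈ F, ξ i ≤ ζ i) →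
    0 < wProb w (agreesOn F ξ) → 0 < wProb w (agreesOn F ζ) →
    wProb w (fun ω => ω e = true ∧ agreesOn F ξ ω) / wProb w (agreesOn F ξ) ≤
      wProb w (fun ω => ω e = true ∧ agreesOn F ζ ω) / wProb w (agreesOn F ζ)

/-- The conditional influence `Inf_i^μ(f) := μ[f | ω_i = 1] − μ[f | ω_i = 0]`. -/
noncomputable def condInfluence (w : (ι → Bool) → ℝ) (f : (ι → Bool) → Bool) (i : ι) : ℝ :=
  wProb w (fun ω => f ω = true ∧ ω i = true) / wProb w (fun ω => ω i = true) -
    wProb w (fun ω => f ω = true ∧ ω i = false) / wProb w (fun ω => ω i = false)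

/-- A boolean function is increasing if it is monotone w.r.t. the coordinatewise
partial order on `{0,1}^ι` (with `false ≤ true`). -/
def IncreasingBoolFun (f : (ι → Bool) → Bool) : Prop :=
  ∀ ω ω' : ι → Bool, (∀ i, ω i ≤ ω' i) → f ω ≤ f ω'

end MonotonicMeasures


section DecisionTree

variable {ι : Type*} [Fintype ι] [DecidableEq ι]

/-- The history (queried coordinates together with the revealed values) after `t` steps of
the algorithm with decision rule `ψ` run on the input `ω`.  The decision rule `ψ` gives the
next queried coordinate as a function of the history so far (`ψ [] = i₁` is the first,
deterministic, query). -/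
def algHistory (ψ : List (ι × Bool) → ι) (ω : ι → Bool) : ℕ → List (ι × Bool)
  | 0 => []
  | t + 1 =>
    algHistory ψ ω t ++ [(ψ (algHistory ψ ω t), ω (ψ (algHistory ψ ω t)))]

/-- `algQuery ψ ω t` is the `(t+1)`-st coordinate queried by the algorithm on input `ω`
(indexed from `t = 0`). -/
def algQuery (ψ : List (ι × Bool) → ι) (ω : ι → Bool) (t : ℕ) : ι :=
  ψ (algHistory ψ ω t)

/-- Validity of a decision rule: on any input, the queried coordinates
`i_1(ω), …, i_n(ω)` are pairwise distinct (so they enumerate all of `ι`). -/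
def IsDecisionTree (ψ : List (ι × Bool) → ι) : Prop :=
  ∀ ω : ι → Bool, ∀ s t : ℕ, s < t → t < Fintype.card ι → algQuery ψ ω s ≠ algQuery ψ ω t

/-- The stopping time `τ(ω)`: the least `t ≥ 1` such that the values revealed during the
first `t` queries determine the value `f(ω)`. -/
noncomputable def algStoppingTime (f : (ι → Bool) → Bool) (ψ : List (ι × Bool) → ι)
    (ω : ι → Bool) : ℕ :=
  sInf {t : ℕ | 1 ≤ t ∧ ∀ x : ι → Bool,
    (∀ s < t, x (algQuery ψ ω s) = ω (algQuery ψ ω s)) → f x = f ω}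

/-- The revealment `δ_i(T) := μ[∃ t ≤ τ(ω), i_t(ω) = i]`: the probability (under the
measure with weights `w`) that coordinate `i` is queried before the algorithm
determines `f`. -/
noncomputable def wRevealment (w : (ι → Bool) → ℝ) (f : (ι → Bool) → Bool)
    (ψ : List (ι × Bool) → ι) (i : ι) : ℝ :=
  wProb w (fun ω => ∃ t < algStoppingTime f ψ ω, algQuery ψ ω t = i)

end DecisionTree

section OSSSProof

open Function

variable {ι : Type*} [Fintype ι] [DecidableEq ι]

/-- restricted sum -/
noncomputable def cylSum (w : (ι → Bool) → ℝ) (F : Finset ι) (ξ : ι → Bool)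
    (G : (ι → Bool) → ℝ) : ℝ :=
  ∑ ω : ι → Bool, if agreesOn F ξ ω then w ω * G ω else 0

noncomputable def cylP (w : (ι → Bool) → ℝ) (F : Finset ι) (ξ : ι → Bool) : ℝ :=
  cylSum w F ξ (fun _ => 1)

lemma cylP_eq (w : (ι → Bool) → ℝ) (F : Finset ι) (ξ : ι → Bool) :
    wProb w (agreesOn F ξ) = cylP w F ξ := by
  unfold wProb cylP cylSum
  refine Finset.sum_congr rfl fun ω _ => ?_
  split_ifs <;> simp

lemma agreesOn_insert {F : Finset ι} {e : ι} (he : e ∉ F) (ξ ω : ι → Bool) (b : Bool) :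
    agreesOn (insert e F) (update ξ e b) ω ↔ (ω e = b ∧ agreesOn F ξ ω) := by
  unfold agreesOn
  constructor
  · intro h
    refine ⟨by simpa using h e (Finset.mem_insert_self _ _), fun i hi => ?_⟩
    have := h i (Finset.mem_insert_of_mem hi)
    rwa [update_of_ne (by rintro rfl; exact he hi)] at this
  · rintro ⟨h1, h2⟩ i hi
    rcases Finset.mem_insert.1 hi with rfl | hi
    · simpa using h1
    · have hne : i ≠ e := fun h => he (h ▸ hi)
      rw [update_of_ne hne]; exact h2 i hi

lemma cylSum_insert (w : (ι → Bool) → ℝ) {F : Finset ι} {e : ι} (he : e ∉ F) (ξ : ι → Bool)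
    (b : Bool) (G : (ι → Bool) → ℝ) :
    cylSum w (insert e F) (update ξ e b) G = cylSum w F ξ (fun ω => if ω e = b then G ω else 0) := by
  unfold cylSum
  refine Finset.sum_congr rfl fun ω _ => ?_
  by_cases h1 : ω e = b <;> by_cases h2 : agreesOn F ξ ω <;> simp [agreesOn_insert he, h1, h2]

lemma cylSum_split (w : (ι → Bool) → ℝ) {F : Finset ι} {e : ι} (he : e ∉ F) (ξ : ι → Bool)
    (G : (ι → Bool) → ℝ) :
    cylSum w F ξ G = cylSum w (insert e F) (update ξ e true) G
      + cylSum w (insert e F) (update ξ e false) G := by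
  rw [cylSum_insert w he, cylSum_insert w he]
  unfold cylSum
  rw [← Finset.sum_add_distrib]
  refine Finset.sum_congr rfl fun ω _ => ?_
  cases h1 : ω e <;> by_cases h2 : agreesOn F ξ ω <;> simp [h1, h2]

lemma cylSum_congr (w : (ι → Bool) → ℝ) {F : Finset ι} {ξ ξ' : ι → Bool}
    (h : ∀ i ∈ F, ξ i = ξ' i) (G : (ι → Bool) → ℝ) : cylSum w F ξ G = cylSum w F ξ' G := by
  have : agreesOn F ξ = agreesOn F ξ' := by
    funext ω
    unfold agreesOn
    exact propext ⟨fun H i hi => (H i hi).trans (h i hi), fun H i hi => (H i hi).trans (h i hi).symm⟩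
  unfold cylSum
  rw [this]

lemma cylSum_univ (w : (ι → Bool) → ℝ) (ξ : ι → Bool) (G : (ι → Bool) → ℝ) :
    cylSum w Finset.univ ξ G = w ξ * G ξ := by
  unfold cylSum
  have : ∀ ω, agreesOn Finset.univ ξ ω ↔ ω = ξ := by
    intro ω; unfold agreesOn
    simp [funext_iff]
  simp [this]

lemma cylSum_empty (w : (ι → Bool) → ℝ) (ξ : ι → Bool) (G : (ι → Bool) → ℝ) :
    cylSum w ∅ ξ G = ∑ ω, w ω * G ω := by
  unfold cylSum
  simp [agreesOn]

lemma cylP_nonneg {w : (ι → Bool) → ℝ} (hw : IsProbWeight w) (F : Finset ι) (ξ : ι → Bool) :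
    0 ≤ cylP w F ξ := by
  unfold cylP cylSum
  refine Finset.sum_nonneg fun ω _ => ?_
  split_ifs
  · simpa using hw.1 ω
  · exact le_rfl

lemma cylP_pos {w : (ι → Bool) → ℝ} (hw : IsProbWeight w) (F : Finset ι) (ξ : ι → Bool)
    (h : 0 < w ξ) : 0 < cylP w F ξ := by
  unfold cylP cylSum
  refine Finset.sum_pos' (fun ω _ => ?_) ⟨ξ, Finset.mem_univ _, ?_⟩
  · split_ifs
    · simpa using hw.1 ω
    · exact le_rfl
  · simp [agreesOn, h]

/-- If all cylinder sums of `A` vanish then so does the total. -/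
lemma sum_eq_of_cylSum (w : (ι → Bool) → ℝ) (F : Finset ι) (A B : (ι → Bool) → ℝ)
    (h : ∀ ξ, cylSum w F ξ A = cylSum w F ξ B) :
    ∑ ω, w ω * A ω = ∑ ω, w ω * B ω := by
  let res : (ι → Bool) → (ι → Bool) := fun ω i => if i ∈ F then ω i else false
  rw [← Finset.sum_fiberwise Finset.univ res (fun ω => w ω * A ω),
    ← Finset.sum_fiberwise Finset.univ res (fun ω => w ω * B ω)]
  refine Finset.sum_congr rfl fun ξ _ => ?_
  rw [Finset.sum_filter, Finset.sum_filter]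
  by_cases hξ : res ξ = ξ
  · have : ∀ ω, res ω = ξ ↔ agreesOn F ξ ω := by
      intro ω
      constructor
      · rintro rfl i hi
        simp [res, hi]
      · intro H
        rw [← hξ]
        funext i
        by_cases hi : i ∈ F
        · simp [res, hi, H i hi]
        · simp [res, hi]
    have h' := h ξ
    unfold cylSum at h'
    simpa only [this] using h'
  · have : ∀ ω, res ω ≠ ξ := by
      rintro ω rfl
      apply hξ
      funext i
      by_cases hi : i ∈ F <;> simp [res, hi]
    simp [this]

/-- Monotone extension of the conditional probability kernel. -/
noncomputable def kerQ (w : (ι → Bool) → ℝ) (F : Finset ι) (e : ι) (η : ι → Bool) : ℝ :=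
  Finset.univ.sup' ⟨fun _ => false, Finset.mem_univ _⟩ (fun ζ : ι → Bool =>
    if (∀ i ∈ F, ζ i ≤ η i) ∧ 0 < cylP w F ζ then
      cylSum w F ζ (fun ω => if ω e = true then 1 else 0) / cylP w F ζ else 0)

lemma cyl_ratio_bounds {w : (ι → Bool) → ℝ} (hw : IsProbWeight w) (F : Finset ι) (e : ι)
    (ζ : ι → Bool) : 0 ≤ cylSum w F ζ (fun ω => if ω e = true then 1 else 0) ∧
      cylSum w F ζ (fun ω => if ω e = true then 1 else 0) ≤ cylP w F ζ := by
  unfold cylP cylSum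
  constructor
  · refine Finset.sum_nonneg fun ω _ => ?_
    have := hw.1 ω
    by_cases h1 : ω e = true <;> by_cases h2 : agreesOn F ζ ω <;> simp [h1, h2, this]
  · refine Finset.sum_le_sum fun ω _ => ?_
    have := hw.1 ω
    by_cases h1 : ω e = true <;> by_cases h2 : agreesOn F ζ ω <;> simp [h1, h2, this]

lemma kerQ_nonneg {w : (ι → Bool) → ℝ} (hw : IsProbWeight w) (F : Finset ι) (e : ι)
    (η : ι → Bool) : 0 ≤ kerQ w F e η := by
  unfold kerQ
  refine le_trans ?_ (Finset.le_sup' _ (Finset.mem_univ η))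
  split_ifs with h
  · exact div_nonneg (cyl_ratio_bounds hw F e η).1 h.2.le
  · exact le_rfl

lemma kerQ_le_one {w : (ι → Bool) → ℝ} (hw : IsProbWeight w) (F : Finset ι) (e : ι)
    (η : ι → Bool) : kerQ w F e η ≤ 1 := by
  unfold kerQ
  refine Finset.sup'_le _ _ fun ζ _ => ?_
  split_ifs with h
  · exact (div_le_one h.2).2 (cyl_ratio_bounds hw F e ζ).2
  · exact zero_le_one

lemma kerQ_mono {w : (ι → Bool) → ℝ} (hw : IsProbWeight w) (F : Finset ι) (e : ι)
    {η η' : ι → Bool} (hη : ∀ i ∈ F, η i ≤ η' i) : kerQ w F e η ≤ kerQ w F e η' := by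
  conv_lhs => unfold kerQ
  refine Finset.sup'_le _ _ fun ζ _ => ?_
  split_ifs with h
  · unfold kerQ
    refine le_trans ?_ (Finset.le_sup' _ (Finset.mem_univ ζ))
    rw [if_pos ⟨fun i hi => (h.1 i hi).trans (hη i hi), h.2⟩]
  · exact kerQ_nonneg hw F e η'

lemma kerQ_congr {w : (ι → Bool) → ℝ} (hw : IsProbWeight w) (F : Finset ι) (e : ι)
    {η η' : ι → Bool} (hη : ∀ i ∈ F, η i = η' i) : kerQ w F e η = kerQ w F e η' :=
  le_antisymm (kerQ_mono hw F e fun i hi => (hη i hi).le)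
    (kerQ_mono hw F e fun i hi => (hη i hi).ge)

lemma kerQ_mul {w : (ι → Bool) → ℝ} (hw : IsProbWeight w) (hm : IsMonotonic w)
    (F : Finset ι) (e : ι) (η : ι → Bool) :
    kerQ w F e η * cylP w F η = cylSum w F η (fun ω => if ω e = true then 1 else 0) := by
  rcases (cylP_nonneg hw F η).eq_or_lt with h0 | h0
  · have := cyl_ratio_bounds hw F e η
    rw [← h0] at this ⊢
    linarith [this.1, this.2]
  · have hk : kerQ w F e η
        = cylSum w F η (fun ω => if ω e = true then 1 else 0) / cylP w F η := by
      unfold kerQ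
      apply le_antisymm
      · refine Finset.sup'_le _ _ fun ζ _ => ?_
        split_ifs with h
        · have key := hm e F ζ η h.1 (by rw [cylP_eq]; exact h.2) (by rw [cylP_eq]; exact h0)
          have conv : ∀ ξ, wProb w (fun ω => ω e = true ∧ agreesOn F ξ ω)
              = cylSum w F ξ (fun ω => if ω e = true then 1 else 0) := by
            intro ξ
            unfold wProb cylSum
            refine Finset.sum_congr rfl fun ω _ => ?_
            by_cases h1 : ω e = true <;> by_cases h2 : agreesOn F ξ ω <;> simp [h1, h2]
          rwa [conv, conv, cylP_eq, cylP_eq] at key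
        · exact div_nonneg (cyl_ratio_bounds hw F e η).1 h0.le
      · refine le_trans ?_ (Finset.le_sup' _ (Finset.mem_univ η))
        rw [if_pos ⟨fun _ _ => le_rfl, h0⟩]
    rw [hk, div_mul_cancel₀ _ h0.ne']

lemma cylP_true {w : (ι → Bool) → ℝ} (hw : IsProbWeight w) (hm : IsMonotonic w)
    {F : Finset ι} {e : ι} (he : e ∉ F) (η : ι → Bool) :
    cylP w (insert e F) (update η e true) = kerQ w F e η * cylP w F η := by
  rw [kerQ_mul hw hm, cylP, cylSum_insert w he]

lemma cylP_false {w : (ι → Bool) → ℝ} (hw : IsProbWeight w) (hm : IsMonotonic w)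
    {F : Finset ι} {e : ι} (he : e ∉ F) (η : ι → Bool) :
    cylP w (insert e F) (update η e false) = (1 - kerQ w F e η) * cylP w F η := by
  have := cylSum_split w he η (fun _ => 1)
  have h2 := cylP_true hw hm he η
  unfold cylP at *
  linarith

lemma update_le_update {F : Finset ι} {e : ι} {η η' : ι → Bool} (h : ∀ i ∈ F, η i ≤ η' i)
    {b b' : Bool} (hb : b ≤ b') : ∀ i ∈ insert e F, update η e b i ≤ update η' e b' i := by
  intro i hi
  by_cases hie : i = e
  · subst hie; simpa using hb
  · rw [update_of_ne hie, update_of_ne hie]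
    exact h i ((Finset.mem_insert.1 hi).resolve_left hie)

def MonoFun (G : (ι → Bool) → ℝ) : Prop := ∀ η η', (∀ i, η i ≤ η' i) → G η ≤ G η'

/-! FKG -/

noncomputable def listK (w : (ι → Bool) → ℝ) (G : (ι → Bool) → ℝ) :
    List ι → Finset ι → (ι → Bool) → ℝ
  | [], _, η => G η
  | e :: L, F, η => kerQ w F e η * listK w G L (insert e F) (update η e true)
      + (1 - kerQ w F e η) * listK w G L (insert e F) (update η e false)

def listWF : List ι → Finset ι → Prop
  | [], F => F = Finset.univ
  | e :: L, F => e ∉ F ∧ listWF L (insert e F)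

lemma listK_mono {w : (ι → Bool) → ℝ} (hw : IsProbWeight w) {G : (ι → Bool) → ℝ}
    (hG : MonoFun G) (L : List ι) : ∀ (F : Finset ι), listWF L F → ∀ η η' : ι → Bool,
      (∀ i ∈ F, η i ≤ η' i) → listK w G L F η ≤ listK w G L F η' := by
  induction L with
  | nil =>
    rintro F rfl η η' h
    exact hG _ _ fun i => h i (Finset.mem_univ i)
  | cons e L ih =>
    rintro F ⟨he, hF⟩ η η' h
    simp only [listK]
    have h1 := ih _ hF _ _ (update_le_update (e := e) h (le_refl true))
    have h0 := ih _ hF _ _ (update_le_update (e := e) h (le_refl false))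
    have h10 := ih _ hF _ _ (update_le_update (e := e) (η := η') (fun _ _ => le_refl _)
      (Bool.false_le true))
    have q0 := kerQ_nonneg hw F e η
    have q1 := kerQ_le_one hw F e η
    have qq := kerQ_mono hw F e h
    nlinarith [mul_nonneg q0 (sub_nonneg.2 h1), mul_nonneg (sub_nonneg.2 q1) (sub_nonneg.2 h0),
      mul_nonneg (sub_nonneg.2 qq) (sub_nonneg.2 h10)]

lemma listK_assoc {w : (ι → Bool) → ℝ} (hw : IsProbWeight w) {G H : (ι → Bool) → ℝ}
    (hG : MonoFun G) (hH : MonoFun H) (L : List ι) : ∀ (F : Finset ι), listWF L F →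
      ∀ η : ι → Bool,
      listK w G L F η * listK w H L F η ≤ listK w (fun ω => G ω * H ω) L F η := by
  induction L with
  | nil => intro F _ η; exact le_rfl
  | cons e L ih =>
    rintro F ⟨he, hF⟩ η
    simp only [listK]
    have h1 := ih _ hF (update η e true)
    have h0 := ih _ hF (update η e false)
    have m1 := listK_mono hw hG L _ hF _ _ (update_le_update (e := e) (η := η)
      (fun _ _ => le_refl _) (Bool.false_le true))
    have m2 := listK_mono hw hH L _ hF _ _ (update_le_update (e := e) (η := η)
      (fun _ _ => le_refl _) (Bool.false_le true))
    have q0 := kerQ_nonneg hw F e η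
    have q1 := kerQ_le_one hw F e η
    nlinarith [mul_nonneg q0 (sub_nonneg.2 h1), mul_nonneg (sub_nonneg.2 q1) (sub_nonneg.2 h0),
      mul_nonneg (mul_nonneg q0 (sub_nonneg.2 q1)) (mul_nonneg (sub_nonneg.2 m1) (sub_nonneg.2 m2))]

lemma listK_eq {w : (ι → Bool) → ℝ} (hw : IsProbWeight w) (hm : IsMonotonic w)
    (G : (ι → Bool) → ℝ) (L : List ι) : ∀ (F : Finset ι), listWF L F →
      ∀ η : ι → Bool, listK w G L F η * cylP w F η = cylSum w F η G := by
  induction L with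
  | nil =>
    rintro F rfl η
    rw [cylP, cylSum_univ, cylSum_univ, listK]; ring
  | cons e L ih =>
    rintro F ⟨he, hF⟩ η
    simp only [listK]
    rw [cylSum_split w he, ← ih _ hF, ← ih _ hF, cylP_true hw hm he, cylP_false hw hm he]
    ring

lemma exists_listWF (F : Finset ι) : ∃ L : List ι, listWF L F := by
  induction h : (Finset.univ \ F).card generalizing F with
  | zero =>
    refine ⟨[], ?_⟩
    rw [Finset.card_eq_zero, Finset.sdiff_eq_empty_iff_subset] at h
    exact Finset.univ_subset_iff.1 h
  | succ k ih =>
    obtain ⟨e, he⟩ : (Finset.univ \ F).Nonempty := Finset.card_pos.1 (by omega)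
    have he' : e ∉ F := (Finset.mem_sdiff.1 he).2
    obtain ⟨L, hL⟩ := ih (insert e F) (by
      have hh : Finset.univ \ insert e F = (Finset.univ \ F).erase e := by
        ext i; simp
      rw [hh, Finset.card_erase_of_mem he]; omega)
    exact ⟨e :: L, he', hL⟩

lemma osssFkg {w : (ι → Bool) → ℝ} (hw : IsProbWeight w) (hm : IsMonotonic w)
    {G H : (ι → Bool) → ℝ} (hG : MonoFun G) (hH : MonoFun H) :
    (∑ ω, w ω * G ω) * (∑ ω, w ω * H ω) ≤ ∑ ω, w ω * (G ω * H ω) := by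
  obtain ⟨L, hL⟩ := exists_listWF (∅ : Finset ι)
  have h1 : ∀ A : (ι → Bool) → ℝ, listK w A L ∅ (fun _ => false) = ∑ ω, w ω * A ω := by
    intro A
    have := listK_eq hw hm A L ∅ hL (fun _ => false)
    rw [cylP, cylSum_empty, cylSum_empty] at this
    simpa [hw.2] using this
  have := listK_assoc hw hG hH L ∅ hL (fun _ => false)
  rwa [h1, h1, h1] at this


/-! Trees -/

inductive QTree (ι : Type*) where
  | leaf : QTree ι
  | node (e : ι) (l r : QTree ι) : QTree ι

def QTree.WF : QTree ι → Finset ι → Prop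
  | .leaf, F => F = Finset.univ
  | .node e l r, F => e ∉ F ∧ l.WF (insert e F) ∧ r.WF (insert e F)

/-- coupled expectation of `g(X) f(Y)` -/
noncomputable def coupC (w g f : (ι → Bool) → ℝ) :
    QTree ι → Finset ι → (ι → Bool) → (ι → Bool) → ℝ
  | .leaf, _, ξ, η => g ξ * f η
  | .node e l r, F, ξ, η =>
    min (kerQ w F e ξ) (kerQ w F e η)
        * coupC w g f r (insert e F) (update ξ e true) (update η e true)
    + (kerQ w F e ξ - min (kerQ w F e ξ) (kerQ w F e η))
        * coupC w g f r (insert e F) (update ξ e true) (update η e false)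
    + (kerQ w F e η - min (kerQ w F e ξ) (kerQ w F e η))
        * coupC w g f l (insert e F) (update ξ e false) (update η e true)
    + (1 - kerQ w F e ξ - kerQ w F e η + min (kerQ w F e ξ) (kerQ w F e η))
        * coupC w g f l (insert e F) (update ξ e false) (update η e false)

lemma coup_arith {p q q' a11 a10 a01 a00 b11 b10 b01 b00 : ℝ} (p0 : 0 ≤ p) (p1 : p ≤ 1)
    (q0 : 0 ≤ q) (q1 : q ≤ 1) (qq : q ≤ q') (h11 : a11 ≤ b11) (h10 : a10 ≤ b10)
    (h01 : a01 ≤ b01) (h00 : a00 ≤ b00) (hb1 : b10 ≤ b11) (hb0 : b00 ≤ b01) :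
    min p q * a11 + (p - min p q) * a10 + (q - min p q) * a01 + (1 - p - q + min p q) * a00
    ≤ min p q' * b11 + (p - min p q') * b10 + (q' - min p q') * b01
      + (1 - p - q' + min p q') * b00 := by
  have m0 : 0 ≤ min p q := le_min p0 q0
  have m1 : 0 ≤ p - min p q := sub_nonneg.2 (min_le_left _ _)
  have m2 : 0 ≤ q - min p q := sub_nonneg.2 (min_le_right _ _)
  have m3 : 0 ≤ 1 - p - q + min p q := by
    rcases min_choice p q with h | h <;> rw [h] <;> linarith
  have mm : min p q ≤ min p q' := min_le_min le_rfl qq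
  have mm' : q - min p q ≤ q' - min p q' := by
    rcases le_total p q with h | h
    · rw [min_eq_left h, min_eq_left (h.trans qq)]; linarith
    · rw [min_eq_right h]
      have := min_le_right p q'
      linarith
  nlinarith [mul_nonneg m0 (sub_nonneg.2 h11), mul_nonneg m1 (sub_nonneg.2 h10),
    mul_nonneg m2 (sub_nonneg.2 h01), mul_nonneg m3 (sub_nonneg.2 h00),
    mul_nonneg (sub_nonneg.2 mm) (sub_nonneg.2 hb1),
    mul_nonneg (sub_nonneg.2 mm') (sub_nonneg.2 hb0)]

lemma coupC_mono {w : (ι → Bool) → ℝ} (hw : IsProbWeight w) {g f : (ι → Bool) → ℝ}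
    (hg : ∀ ω, 0 ≤ g ω) (hf : MonoFun f) (T : QTree ι) :
    ∀ (F : Finset ι), T.WF F → ∀ ξ η η' : ι → Bool,
      (∀ i ∈ F, η i ≤ η' i) → coupC w g f T F ξ η ≤ coupC w g f T F ξ η' := by
  induction T with
  | leaf =>
    rintro F hF ξ η η' h
    have hF : F = Finset.univ := hF
    subst hF
    exact mul_le_mul_of_nonneg_left (hf _ _ fun i => h i (Finset.mem_univ i)) (hg ξ)
  | node e l r ihl ihr =>
    rintro F ⟨he, hl, hr⟩ ξ η η' h
    simp only [coupC]
    have hft := Bool.false_le true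
    refine coup_arith (kerQ_nonneg hw F e ξ) (kerQ_le_one hw F e ξ) (kerQ_nonneg hw F e η)
      (kerQ_le_one hw F e η) (kerQ_mono hw F e h) ?_ ?_ ?_ ?_ ?_ ?_
    · exact ihr _ hr _ _ _ (update_le_update h le_rfl)
    · exact ihr _ hr _ _ _ (update_le_update h le_rfl)
    · exact ihl _ hl _ _ _ (update_le_update h le_rfl)
    · exact ihl _ hl _ _ _ (update_le_update h le_rfl)
    · exact ihr _ hr _ _ _ (update_le_update (fun _ _ => le_rfl) hft)
    · exact ihl _ hl _ _ _ (update_le_update (fun _ _ => le_rfl) hft)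

lemma coupC_congr {w : (ι → Bool) → ℝ} (hw : IsProbWeight w) {g f : (ι → Bool) → ℝ}
    (hg : ∀ ω, 0 ≤ g ω) (hf : MonoFun f) {T : QTree ι}
    {F : Finset ι} (hT : T.WF F) (ξ : ι → Bool) {η η' : ι → Bool}
    (h : ∀ i ∈ F, η i = η' i) : coupC w g f T F ξ η = coupC w g f T F ξ η' :=
  le_antisymm (coupC_mono hw hg hf T F hT ξ _ _ fun i hi => (h i hi).le)
    (coupC_mono hw hg hf T F hT ξ _ _ fun i hi => (h i hi).ge)

lemma coupC_compl (w g f : (ι → Bool) → ℝ) (T : QTree ι) :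
    ∀ (F : Finset ι) (ξ η : ι → Bool),
      coupC w (fun ω => 1 - g ω) f T F ξ η
        = coupC w (fun _ => 1) f T F ξ η - coupC w g f T F ξ η := by
  induction T with
  | leaf => intro F ξ η; simp only [coupC]; ring
  | node e l r ihl ihr =>
    intro F ξ η
    simp only [coupC, ihl, ihr]; ring

lemma coupC_one {w : (ι → Bool) → ℝ} (hw : IsProbWeight w) (hm : IsMonotonic w)
    (f : (ι → Bool) → ℝ) (T : QTree ι) : ∀ (F : Finset ι), T.WF F →
      ∀ ξ η : ι → Bool, coupC w (fun _ => 1) f T F ξ η * cylP w F η = cylSum w F η f := by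
  induction T with
  | leaf =>
    rintro F hF ξ η
    have hF : F = Finset.univ := hF
    subst hF
    rw [cylP, cylSum_univ, cylSum_univ, coupC]; ring
  | node e l r ihl ihr =>
    rintro F ⟨he, hl, hr⟩ ξ η
    simp only [coupC]
    have s := cylSum_split w he η f
    have r1 := ihr _ hr (update ξ e true) (update η e true)
    have r0 := ihr _ hr (update ξ e true) (update η e false)
    have l1 := ihl _ hl (update ξ e false) (update η e true)
    have l0 := ihl _ hl (update ξ e false) (update η e false)
    have hft := Bool.false_le true
    rw [cylP_true hw hm he] at r1 l1
    rw [cylP_false hw hm he] at r0 l0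
    generalize coupC w (fun _ => 1) f r (insert e F) (update ξ e true) (update η e true) = R1 at *
    generalize coupC w (fun _ => 1) f r (insert e F) (update ξ e true) (update η e false) = R0 at *
    generalize coupC w (fun _ => 1) f l (insert e F) (update ξ e false) (update η e true) = L1 at *
    generalize coupC w (fun _ => 1) f l (insert e F) (update ξ e false) (update η e false) = L0 at *
    generalize cylP w F η = P at *
    have q0 := kerQ_nonneg hw F e η
    have q1 := kerQ_le_one hw F e η
    have p0 := kerQ_nonneg hw F e ξ
    have p1 := kerQ_le_one hw F e ξ
    generalize kerQ w F e η = q at *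
    generalize kerQ w F e ξ = p at *
    rw [s]
    rcases q0.eq_or_lt with hq | hq
    · subst hq
      rw [min_eq_right p0]
      linear_combination r1 + (p - 0) * r0 + (1 - p) * l0
    rcases q1.eq_or_lt with hq1 | hq1
    · subst hq1
      rw [min_eq_left p1]
      linear_combination r0 + p * r1 + (1 - p) * l1
    · have e1 : R1 * P = L1 * P := mul_left_cancel₀ hq.ne' (by linarith)
      have e0 : R0 * P = L0 * P := mul_left_cancel₀ (sub_pos.2 hq1).ne' (by linarith)
      linear_combination r1 + r0 + (min p q - q) * e1 + (p - min p q - 1 + q) * e0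

lemma coupC_diag {w : (ι → Bool) → ℝ} (hw : IsProbWeight w) (hm : IsMonotonic w)
    (g f : (ι → Bool) → ℝ) (T : QTree ι) : ∀ (F : Finset ι), T.WF F →
      ∀ ξ : ι → Bool, coupC w g f T F ξ ξ * cylP w F ξ
        = cylSum w F ξ (fun ω => g ω * f ω) := by
  induction T with
  | leaf =>
    rintro F hF ξ
    have hF : F = Finset.univ := hF
    subst hF
    rw [cylP, cylSum_univ, cylSum_univ, coupC]; ring
  | node e l r ihl ihr =>
    rintro F ⟨he, hl, hr⟩ ξ
    simp only [coupC, min_self]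
    rw [cylSum_split w he, ← ihr _ hr, ← ihl _ hl, cylP_true hw hm he, cylP_false hw hm he]
    ring

lemma coupC_det {w : (ι → Bool) → ℝ} (g f : (ι → Bool) → ℝ) (c : ℝ) (T : QTree ι) :
    ∀ (F : Finset ι), T.WF F → ∀ ξ η : ι → Bool, (∀ x, agreesOn F ξ x → g x = c) →
      coupC w g f T F ξ η = c * coupC w (fun _ => 1) f T F ξ η := by
  induction T with
  | leaf =>
    intro F _ ξ η h
    simp only [coupC]
    rw [h ξ (fun _ _ => rfl)]; ring
  | node e l r ihl ihr =>
    rintro F ⟨he, hl, hr⟩ ξ η h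
    have h1 : ∀ b x, agreesOn (insert e F) (update ξ e b) x → g x = c := fun b x hx =>
      h x ((agreesOn_insert he ξ x b).1 hx).2
    simp only [coupC]
    rw [ihr _ hr _ _ (h1 true), ihr _ hr _ _ (h1 true), ihl _ hl _ _ (h1 false),
      ihl _ hl _ _ (h1 false)]
    ring

lemma disint {w : (ι → Bool) → ℝ} (hw : IsProbWeight w) (hm : IsMonotonic w)
    {F : Finset ι} {e : ι} (he : e ∉ F) (H : (ι → Bool) → ℝ)
    (hH : ∀ η η', (∀ i ∈ insert e F, η i = η' i) → H η = H η') :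
    ∑ ω, w ω * H ω = ∑ ω, w ω * (kerQ w F e ω * H (update ω e true)
      + (1 - kerQ w F e ω) * H (update ω e false)) := by
  have key : ∀ (F' : Finset ι) (ξ : ι → Bool) (A : (ι → Bool) → ℝ) (c : ℝ),
      (∀ ω, agreesOn F' ξ ω → A ω = c) → cylSum w F' ξ A = c * cylP w F' ξ := by
    intro F' ξ A c h
    unfold cylP cylSum
    rw [Finset.mul_sum]
    refine Finset.sum_congr rfl fun ω _ => ?_
    split_ifs with h1
    · rw [h ω h1]; ring
    · ring
  refine sum_eq_of_cylSum w F _ _ fun ξ => ?_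
  rw [cylSum_split w he ξ H,
    key F ξ _ (kerQ w F e ξ * H (update ξ e true) + (1 - kerQ w F e ξ) * H (update ξ e false)), key _ _ H (H (update ξ e true)), key _ _ H (H (update ξ e false)),
    cylP_true hw hm he, cylP_false hw hm he]
  · ring
  · exact fun ω h => hH _ _ h
  · exact fun ω h => hH _ _ h
  · intro ω h
    have hu : ∀ b, H (update ω e b) = H (update ξ e b) := by
      intro b
      apply hH
      intro i hi
      by_cases hie : i = e
      · subst hie; simp
      · rw [update_of_ne hie, update_of_ne hie]
        exact h i ((Finset.mem_insert.1 hi).resolve_left hie)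
    rw [hu, hu, kerQ_congr hw F e h]

noncomputable def covE (w f : (ι → Bool) → ℝ) (e : ι) : ℝ :=
  (∑ ω, w ω * (f ω * if ω e = true then 1 else 0))
    - (∑ ω, w ω * f ω) * (∑ ω, w ω * if ω e = true then 1 else 0)

lemma sum_congr_pos {w : (ι → Bool) → ℝ} (hw : IsProbWeight w) {A B : (ι → Bool) → ℝ}
    (h : ∀ ω, 0 < w ω → A ω = B ω) : ∑ ω, w ω * A ω = ∑ ω, w ω * B ω := by
  refine Finset.sum_congr rfl fun ω _ => ?_
  rcases (hw.1 ω).eq_or_lt with h0 | h0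
  · rw [← h0]; ring
  · rw [h ω h0]

lemma sum_le_pos {w : (ι → Bool) → ℝ} (hw : IsProbWeight w) {A B : (ι → Bool) → ℝ}
    (h : ∀ ω, 0 < w ω → A ω ≤ B ω) : ∑ ω, w ω * A ω ≤ ∑ ω, w ω * B ω := by
  refine Finset.sum_le_sum fun ω _ => ?_
  rcases (hw.1 ω).eq_or_lt with h0 | h0
  · rw [← h0]; simp
  · exact mul_le_mul_of_nonneg_left (h ω h0) h0.le

def Undet (f : (ι → Bool) → ℝ) (F : Finset ι) (ω : ι → Bool) : Prop :=
  ¬ ∀ x, agreesOn F ω x → f x = f ω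

lemma coind_mono (e : ι) : MonoFun (fun ω : ι → Bool => if ω e = true then (1 : ℝ) else 0) := by
  intro η η' h
  have := h e
  cases h1 : η e <;> cases h2 : η' e <;> rw [h1, h2] at this <;> simp [h1, h2]
  exact absurd this (by decide)

lemma covE_nonneg {w : (ι → Bool) → ℝ} (hw : IsProbWeight w) (hm : IsMonotonic w)
    {f : (ι → Bool) → ℝ} (hf : MonoFun f) (e : ι) : 0 ≤ covE w f e :=
  sub_nonneg.2 (osssFkg hw hm hf (coind_mono e))

/-- `kappa` bound. -/
lemma kappa_bounds {p q : ℝ} (p0 : 0 ≤ p) (p1 : p ≤ 1) (q0 : 0 ≤ q) (q1 : q ≤ 1) :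
    0 ≤ min p q - p * q ∧ min p q - p * q ≤ q * (1 - q) := by
  rcases le_total p q with h | h
  · rw [min_eq_left h]; constructor <;> nlinarith
  · rw [min_eq_right h]; constructor <;> nlinarith

lemma undet_step {w : (ι → Bool) → ℝ} (hw : IsProbWeight w) (hm : IsMonotonic w)
    {f : (ι → Bool) → ℝ} (hf : MonoFun f) {e : ι} {l r : QTree ι} {F : Finset ι}
    (hT : (QTree.node e l r).WF F) (ξ ξ' : ι → Bool) :
    ∑ ω, w ω * (kerQ w F e ω * (1 - kerQ w F e ω)
      * (coupC w (fun _ => 1) f r (insert e F) ξ' (update ω e true)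
        - coupC w (fun _ => 1) f r (insert e F) ξ' (update ω e false))) ≤ covE w f e := by
  obtain ⟨he, hl, hr⟩ := id hT
  set N : (ι → Bool) → ℝ := fun ω => coupC w (fun _ => 1) f (QTree.node e l r) F ξ ω with hN
  set M : (ι → Bool) → ℝ := fun ω => coupC w (fun _ => 1) f r (insert e F) ξ' ω with hM
  have hNmono : MonoFun N := fun η η' h =>
    coupC_mono hw (fun _ => zero_le_one) hf _ F hT ξ η η' fun i _ => h i
  have hQmono : MonoFun (fun ω => kerQ w F e ω) := fun η η' h =>
    kerQ_mono hw F e fun i _ => h i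
  have hNP : ∀ ω, N ω * cylP w F ω = cylSum w F ω f := fun ω => coupC_one hw hm f _ F hT ξ ω
  have hM1 : ∀ ω, kerQ w F e ω * M (update ω e true) * cylP w F ω
      = cylSum w (insert e F) (update ω e true) f := fun ω => by
    rw [← coupC_one hw hm f r _ hr ξ' (update ω e true), cylP_true hw hm he]
    simp only [hM]; ring
  have hM0 : ∀ ω, (1 - kerQ w F e ω) * M (update ω e false) * cylP w F ω
      = cylSum w (insert e F) (update ω e false) f := fun ω => by
    rw [← coupC_one hw hm f r _ hr ξ' (update ω e false), cylP_false hw hm he]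
    simp only [hM]; ring
  have hpt : ∀ ω, 0 < w ω → kerQ w F e ω * (1 - kerQ w F e ω)
      * (M (update ω e true) - M (update ω e false))
      = kerQ w F e ω * M (update ω e true) - N ω * kerQ w F e ω := by
    intro ω hω
    have hP := cylP_pos hw F ω hω
    have : N ω = kerQ w F e ω * M (update ω e true)
        + (1 - kerQ w F e ω) * M (update ω e false) := by
      apply mul_right_cancel₀ hP.ne'
      rw [hNP, cylSum_split w he, ← hM1, ← hM0]; ring
    rw [this]; ring
  have hconst : ∀ (A : (ι → Bool) → ℝ) (ξ₀ : ι → Bool),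
      (∀ ω, agreesOn F ξ₀ ω → A ω = A ξ₀) → cylSum w F ξ₀ A = A ξ₀ * cylP w F ξ₀ := by
    intro A ξ₀ h
    unfold cylP cylSum
    rw [Finset.mul_sum]
    refine Finset.sum_congr rfl fun ω _ => ?_
    split_ifs with h1
    · rw [h ω h1]; ring
    · ring
  have s1 : ∑ ω, w ω * (kerQ w F e ω * M (update ω e true))
      = ∑ ω, w ω * (f ω * if ω e = true then 1 else 0) := by
    refine sum_eq_of_cylSum w F _ _ fun ξ₀ => ?_
    rw [hconst, hM1, cylSum_insert w he]
    · congr 1; funext ω; split_ifs <;> simp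
    · intro ω h
      have h1 : M (update ω e true) = M (update ξ₀ e true) := by
        refine coupC_congr hw (fun _ => zero_le_one) hf hr ξ' fun i hi => ?_
        by_cases hie : i = e
        · subst hie; simp
        · rw [update_of_ne hie, update_of_ne hie]
          exact h i ((Finset.mem_insert.1 hi).resolve_left hie)
      rw [h1, kerQ_congr hw F e h]
  have s2 : ∑ ω, w ω * N ω = ∑ ω, w ω * f ω := by
    refine sum_eq_of_cylSum w F _ _ fun ξ₀ => ?_
    rw [hconst, hNP]
    intro ω h
    exact coupC_congr hw (fun _ => zero_le_one) hf hT ξ h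
  have s3 : ∑ ω, w ω * kerQ w F e ω = ∑ ω, w ω * if ω e = true then 1 else 0 := by
    refine sum_eq_of_cylSum w F _ _ fun ξ₀ => ?_
    rw [hconst, kerQ_mul hw hm]
    intro ω h
    exact kerQ_congr hw F e h
  have hfk := osssFkg hw hm hNmono hQmono
  rw [s2, s3] at hfk
  rw [sum_congr_pos hw hpt]
  simp only [mul_sub, Finset.sum_sub_distrib]
  rw [s1]
  unfold covE
  linarith

lemma main_step {w : (ι → Bool) → ℝ} (hw : IsProbWeight w) (hm : IsMonotonic w)
    {f : (ι → Bool) → ℝ} (hf : MonoFun f) (f0 : ∀ ω, 0 ≤ f ω) (f1 : ∀ ω, f ω ≤ 1)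
    {e : ι} {l r : QTree ι} {F : Finset ι}
    (hT : (QTree.node e l r).WF F) (ξ : ι → Bool) :
    ∑ ω, w ω * coupC w f f (QTree.node e l r) F ξ ω ≤
      (if Undet f F ξ then covE w f e else 0)
      + kerQ w F e ξ * ∑ ω, w ω * coupC w f f r (insert e F) (update ξ e true) ω
      + (1 - kerQ w F e ξ) * ∑ ω, w ω * coupC w f f l (insert e F) (update ξ e false) ω := by
  obtain ⟨he, hl, hr⟩ := id hT
  have p0 := kerQ_nonneg hw F e ξ
  have p1 := kerQ_le_one hw F e ξ
  rw [disint hw hm he (fun ω => coupC w f f r (insert e F) (update ξ e true) ω)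
      (fun η η' h => coupC_congr hw f0 hf hr _ h),
    disint hw hm he (fun ω => coupC w f f l (insert e F) (update ξ e false) ω)
      (fun η η' h => coupC_congr hw f0 hf hl _ h)]
  have expand : ∑ ω, w ω * coupC w f f (QTree.node e l r) F ξ ω =
      ∑ ω, w ω * ((min (kerQ w F e ξ) (kerQ w F e ω) - kerQ w F e ξ * kerQ w F e ω) *
        ((coupC w f f r (insert e F) (update ξ e true) (update ω e true)
          - coupC w f f r (insert e F) (update ξ e true) (update ω e false))
        - (coupC w f f l (insert e F) (update ξ e false) (update ω e true)
          - coupC w f f l (insert e F) (update ξ e false) (update ω e false))))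
      + kerQ w F e ξ * ∑ ω, w ω * (kerQ w F e ω *
            coupC w f f r (insert e F) (update ξ e true) (update ω e true)
          + (1 - kerQ w F e ω) *
            coupC w f f r (insert e F) (update ξ e true) (update ω e false))
      + (1 - kerQ w F e ξ) * ∑ ω, w ω * (kerQ w F e ω *
            coupC w f f l (insert e F) (update ξ e false) (update ω e true)
          + (1 - kerQ w F e ω) *
            coupC w f f l (insert e F) (update ξ e false) (update ω e false)) := by
    rw [Finset.mul_sum, Finset.mul_sum, ← Finset.sum_add_distrib, ← Finset.sum_add_distrib]
    refine Finset.sum_congr rfl fun ω _ => ?_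
    simp only [coupC]
    ring
  rw [expand]
  gcongr
  split_ifs with hu
  · refine le_trans (sum_le_pos hw fun ω _ => ?_)
      (undet_step hw hm hf hT ξ (update ξ e true))
    obtain ⟨k0, k1⟩ := kappa_bounds p0 p1 (kerQ_nonneg hw F e ω) (kerQ_le_one hw F e ω)
    have hd : ∀ i ∈ insert e F, update ω e false i ≤ update ω e true i :=
      update_le_update (fun _ _ => le_rfl) (Bool.false_le true)
    have a1 := coupC_mono hw f0 hf l _ hl (update ξ e false) _ _ hd
    have a2 := coupC_mono hw (g := fun ω => 1 - f ω) (fun ω => sub_nonneg.2 (f1 ω)) hf r _ hr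
      (update ξ e true) _ _ hd
    have a3 := coupC_mono hw (g := fun _ => 1) (fun ω => zero_le_one) hf r _ hr
      (update ξ e true) _ _ hd
    rw [coupC_compl, coupC_compl] at a2
    refine (mul_le_mul_of_nonneg_left ?_ k0).trans (mul_le_mul_of_nonneg_right k1 ?_)
    · linarith
    · linarith
  · apply le_of_eq
    rw [sum_congr_pos hw (B := fun _ => 0)]
    · simp
    intro ω hω
    have hu' : ∀ x, agreesOn F ξ x → f x = f ξ := not_not.1 hu
    have hP := cylP_pos hw F ω hω
    have hd : ∀ b x, agreesOn (insert e F) (update ξ e b) x → f x = f ξ := fun b x hx =>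
      hu' x ((agreesOn_insert he ξ x b).1 hx).2
    rw [coupC_det f f (f ξ) r _ hr _ _ (hd true), coupC_det f f (f ξ) r _ hr _ _ (hd true),
      coupC_det f f (f ξ) l _ hl _ _ (hd false), coupC_det f f (f ξ) l _ hl _ _ (hd false)]
    have r1 := coupC_one hw hm f r _ hr (update ξ e true) (update ω e true)
    have r0 := coupC_one hw hm f r _ hr (update ξ e true) (update ω e false)
    have l1 := coupC_one hw hm f l _ hl (update ξ e false) (update ω e true)
    have l0 := coupC_one hw hm f l _ hl (update ξ e false) (update ω e false)
    rw [← l1, cylP_true hw hm he] at r1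
    rw [← l0, cylP_false hw hm he] at r0
    have q0 := kerQ_nonneg hw F e ω
    have q1 := kerQ_le_one hw F e ω
    rcases q0.eq_or_lt with hq | hq
    · rw [← hq, min_eq_right p0]; ring
    rcases q1.eq_or_lt with hq1 | hq1
    · rw [hq1, min_eq_left p1]; ring
    · have e1 := mul_right_cancel₀ (mul_pos hq hP).ne' r1
      have e0 := mul_right_cancel₀ (mul_pos (sub_pos.2 hq1) hP).ne' r0
      rw [e1, e0]; ring

noncomputable def pathCost (f : (ι → Bool) → ℝ) (c : ι → ℝ) :
    QTree ι → Finset ι → (ι → Bool) → ℝ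
  | .leaf, _, _ => 0
  | .node e l r, F, ω => (if Undet f F ω then c e else 0)
      + (if ω e = true then pathCost f c r (insert e F) ω else pathCost f c l (insert e F) ω)

lemma undet_congr {f : (ι → Bool) → ℝ} {F : Finset ι} {ξ ω : ι → Bool} (h : agreesOn F ξ ω) :
    Undet f F ω ↔ Undet f F ξ := by
  unfold Undet
  refine not_congr ⟨fun H x hx => ?_, fun H x hx => ?_⟩
  · have h1 := H x fun i hi => (hx i hi).trans (h i hi).symm
    have h2 := H ξ fun i hi => (h i hi).symm
    rw [h1, h2]
  · have h1 := H x fun i hi => (hx i hi).trans (h i hi)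
    rw [h1, H ω h]

lemma main_ind {w : (ι → Bool) → ℝ} (hw : IsProbWeight w) (hm : IsMonotonic w)
    {f : (ι → Bool) → ℝ} (hf : MonoFun f) (f0 : ∀ ω, 0 ≤ f ω) (f1 : ∀ ω, f ω ≤ 1)
    (T : QTree ι) : ∀ (F : Finset ι), T.WF F → ∀ ξ : ι → Bool,
      cylP w F ξ * ∑ ω, w ω * coupC w f f T F ξ ω ≤
        cylSum w F ξ (fun ω => pathCost f (covE w f) T F ω + (∑ ω, w ω * f ω) * f ω) := by
  induction T with
  | leaf =>
    rintro F hF ξ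
    have hF : F = Finset.univ := hF
    subst hF
    rw [cylP, cylSum_univ, cylSum_univ]
    simp only [coupC, pathCost]
    apply le_of_eq
    have : ∑ ω, w ω * (f ξ * f ω) = f ξ * ∑ ω, w ω * f ω := by
      rw [Finset.mul_sum]; exact Finset.sum_congr rfl fun _ _ => by ring
    rw [this]; ring
  | node e l r ihl ihr =>
    intro F hT ξ
    obtain ⟨he, hl, hr⟩ := id hT
    have h1 := ihr _ hr (update ξ e true)
    have h0 := ihl _ hl (update ξ e false)
    have hs := mul_le_mul_of_nonneg_left (main_step hw hm hf f0 f1 hT ξ) (cylP_nonneg hw F ξ)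
    rw [cylP_true hw hm he] at h1
    rw [cylP_false hw hm he] at h0
    refine hs.trans ?_
    have hfin : cylSum w F ξ (fun ω => pathCost f (covE w f) (QTree.node e l r) F ω
          + (∑ ω, w ω * f ω) * f ω)
        = cylP w F ξ * (if Undet f F ξ then covE w f e else 0)
        + cylSum w (insert e F) (update ξ e true)
          (fun ω => pathCost f (covE w f) r (insert e F) ω + (∑ ω, w ω * f ω) * f ω)
        + cylSum w (insert e F) (update ξ e false)
          (fun ω => pathCost f (covE w f) l (insert e F) ω + (∑ ω, w ω * f ω) * f ω) := by
      rw [cylSum_insert w he, cylSum_insert w he]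
      unfold cylP cylSum
      rw [Finset.sum_mul, ← Finset.sum_add_distrib, ← Finset.sum_add_distrib]
      refine Finset.sum_congr rfl fun ω _ => ?_
      by_cases h : agreesOn F ξ ω
      · simp only [h, if_true, pathCost, undet_congr h]
        generalize (if Undet f F ξ then covE w f e else 0) = u
        cases hb : ω e <;> simp <;> ring
      · simp [h]
    rw [hfin]
    linarith

lemma var_le_cost {w : (ι → Bool) → ℝ} (hw : IsProbWeight w) (hm : IsMonotonic w)
    {f : (ι → Bool) → ℝ} (hf : MonoFun f) (f0 : ∀ ω, 0 ≤ f ω) (f1 : ∀ ω, f ω ≤ 1)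
    (T : QTree ι) (hT : T.WF ∅) :
    ∑ ω, w ω * (f ω * f ω) - (∑ ω, w ω * f ω) ^ 2
      ≤ ∑ ω, w ω * pathCost f (covE w f) T ∅ ω := by
  have h := main_ind hw hm hf f0 f1 T ∅ hT (fun _ => false)
  have hd := coupC_diag hw hm f f T ∅ hT (fun _ => false)
  have hc : ∀ ω, coupC w f f T ∅ (fun _ => false) ω
      = coupC w f f T ∅ (fun _ => false) (fun _ => false) := fun ω =>
    coupC_congr hw f0 hf hT _ (by simp)
  simp only [cylP, cylSum_empty, mul_one, hw.2, one_mul] at h hd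
  simp only [hc, ← Finset.sum_mul, hw.2, one_mul, hd, mul_add, Finset.sum_add_distrib] at h
  have h3 : ∑ x, w x * ((∑ ω, w ω * f ω) * f x) = (∑ ω, w ω * f ω) ^ 2 := by
    rw [sq, Finset.mul_sum]; exact Finset.sum_congr rfl fun _ _ => by ring
  linarith

/-! From decision rules to trees -/

def treeOf (ψ : List (ι × Bool) → ι) : ℕ → List (ι × Bool) → QTree ι
  | 0, _ => .leaf
  | k + 1, h => .node (ψ h) (treeOf ψ k (h ++ [(ψ h, false)])) (treeOf ψ k (h ++ [(ψ h, true)]))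

def queried (ψ : List (ι × Bool) → ι) (ω : ι → Bool) (t : ℕ) : Finset ι :=
  (Finset.range t).image (algQuery ψ ω)

lemma queried_succ (ψ : List (ι × Bool) → ι) (ω : ι → Bool) (t : ℕ) :
    queried ψ ω (t + 1) = insert (algQuery ψ ω t) (queried ψ ω t) := by
  unfold queried
  rw [Finset.range_add_one, Finset.image_insert]

lemma mem_queried {ψ : List (ι × Bool) → ι} {ω : ι → Bool} {t s : ℕ} (h : s < t) :
    algQuery ψ ω s ∈ queried ψ ω t :=
  Finset.mem_image_of_mem _ (Finset.mem_range.2 h)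

lemma history_congr (ψ : List (ι × Bool) → ι) {ω ω' : ι → Bool} (t : ℕ)
    (h : ∀ s < t, ω' (algQuery ψ ω s) = ω (algQuery ψ ω s)) :
    ∀ s ≤ t, algHistory ψ ω' s = algHistory ψ ω s := by
  intro s
  induction s with
  | zero => intro _; rfl
  | succ s ih =>
    intro hs
    have h1 := ih (by omega)
    have h2 := h s (by omega)
    unfold algQuery at h2
    simp only [algHistory, h1, h2]

lemma not_mem_queried {ψ : List (ι × Bool) → ι} (hψ : IsDecisionTree ψ) (ω : ι → Bool) {t : ℕ}
    (ht : t < Fintype.card ι) : algQuery ψ ω t ∉ queried ψ ω t := by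
  intro h
  obtain ⟨s, hs, he⟩ := Finset.mem_image.1 h
  exact hψ ω s t (Finset.mem_range.1 hs) ht he

lemma queried_card {ψ : List (ι × Bool) → ι} (hψ : IsDecisionTree ψ) (ω : ι → Bool) :
    queried ψ ω (Fintype.card ι) = Finset.univ := by
  rw [← Finset.card_eq_iff_eq_univ]
  unfold queried
  rw [Finset.card_image_of_injOn, Finset.card_range]
  intro s hs t ht h
  simp only [Finset.coe_range, Set.mem_Iio] at hs ht
  rcases lt_trichotomy s t with h1 | h1 | h1
  · exact absurd h (hψ ω s t h1 ht)
  · exact h1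
  · exact absurd h.symm (hψ ω t s h1 hs)

lemma treeOf_wf {ψ : List (ι × Bool) → ι} (hψ : IsDecisionTree ψ) (k : ℕ) :
    ∀ (t : ℕ) (ω : ι → Bool), t + k = Fintype.card ι →
      (treeOf ψ k (algHistory ψ ω t)).WF (queried ψ ω t) := by
  induction k with
  | zero =>
    intro t ω h
    have : t = Fintype.card ι := by omega
    subst this
    exact queried_card hψ ω
  | succ k ih =>
    intro t ω h
    have hn := not_mem_queried hψ ω (t := t) (by omega)
    have hsub : ∀ b, (treeOf ψ k (algHistory ψ ω t ++ [(algQuery ψ ω t, b)])).WF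
        (insert (algQuery ψ ω t) (queried ψ ω t)) := by
      intro b
      have hag : ∀ s < t, update ω (algQuery ψ ω t) b (algQuery ψ ω s)
          = ω (algQuery ψ ω s) := by
        intro s hs
        rw [update_of_ne]
        intro he
        exact hn (he ▸ mem_queried hs)
      have hh := history_congr ψ t hag
      have hq : ∀ s ≤ t, algQuery ψ (update ω (algQuery ψ ω t) b) s = algQuery ψ ω s := by
        intro s hs
        unfold algQuery
        exact congrArg ψ (hh s hs)
      have := ih (t + 1) (update ω (algQuery ψ ω t) b) (by omega)
      rw [queried_succ, hq t le_rfl] at this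
      have hset : queried ψ (update ω (algQuery ψ ω t) b) t = queried ψ ω t := by
        unfold queried
        refine Finset.image_congr fun s hs => hq s ?_
        simp only [Finset.coe_range, Set.mem_Iio] at hs
        exact hs.le
      rw [hset] at this
      have hhist : algHistory ψ (update ω (algQuery ψ ω t) b) (t + 1)
          = algHistory ψ ω t ++ [(algQuery ψ ω t, b)] := by
        change algHistory ψ _ t ++ [(algQuery ψ _ t, (update ω (algQuery ψ ω t) b)
          (algQuery ψ (update ω (algQuery ψ ω t) b) t))] = _
        rw [hh t le_rfl, hq t le_rfl, update_self]
      rwa [hhist] at this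
    exact ⟨hn, hsub false, hsub true⟩

lemma pathCost_treeOf (f : (ι → Bool) → ℝ) (c : ι → ℝ) (ψ : List (ι × Bool) → ι)
    (ω : ι → Bool) (k : ℕ) : ∀ t : ℕ,
    pathCost f c (treeOf ψ k (algHistory ψ ω t)) (queried ψ ω t) ω
      = ∑ s ∈ Finset.Ico t (t + k),
        if Undet f (queried ψ ω s) ω then c (algQuery ψ ω s) else 0 := by
  induction k with
  | zero => intro t; simp [treeOf, pathCost]
  | succ k ih =>
    intro t
    rw [Finset.sum_eq_sum_Ico_succ_bot (by omega)]
    have := ih (t + 1)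
    rw [show t + 1 + k = t + (k + 1) by ring] at this
    rw [← this, queried_succ]
    simp only [treeOf, pathCost]
    congr 1
    simp only [algHistory, algQuery]
    cases hb : ω (ψ (algHistory ψ ω t)) <;> simp

lemma pathCost_le (f : (ι → Bool) → Bool) (c : ι → ℝ) (hc : ∀ i, 0 ≤ c i)
    (ψ : List (ι × Bool) → ι) (hψ : IsDecisionTree ψ) (ω : ι → Bool) :
    pathCost (boolInd f) c (treeOf ψ (Fintype.card ι) []) ∅ ω
      ≤ ∑ i, (if ∃ t < algStoppingTime f ψ ω, algQuery ψ ω t = i then 1 else 0) * c i := by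
  have h := pathCost_treeOf (boolInd f) c ψ ω (Fintype.card ι) 0
  have hq : queried ψ ω 0 = ∅ := rfl
  rw [hq] at h
  change pathCost (boolInd f) c (treeOf ψ (Fintype.card ι) []) ∅ ω = _ at h
  rw [h, zero_add, ← Finset.range_eq_Ico, ← Finset.sum_filter]
  have hinj : Set.InjOn (algQuery ψ ω) ((Finset.range (Fintype.card ι)).filter
      (fun s => Undet (boolInd f) (queried ψ ω s) ω)) := by
    intro s hs t ht h
    simp only [Finset.coe_filter, Finset.mem_range, Set.mem_setOf_eq] at hs ht
    rcases lt_trichotomy s t with h1 | h1 | h1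
    · exact absurd h (hψ ω s t h1 ht.1)
    · exact h1
    · exact absurd h.symm (hψ ω t s h1 hs.1)
  rw [← Finset.sum_image (f := c) hinj]
  simp only [ite_mul, one_mul, zero_mul]
  rw [← Finset.sum_filter]
  refine Finset.sum_le_sum_of_subset_of_nonneg ?_ fun i _ _ => hc i
  intro i hi
  obtain ⟨s, hs, rfl⟩ := Finset.mem_image.1 hi
  obtain ⟨hs1, hs2⟩ := Finset.mem_filter.1 hs
  refine Finset.mem_filter.2 ⟨Finset.mem_univ _, s, ?_, rfl⟩
  rw [Finset.mem_range] at hs1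
  by_contra hlt
  push Not at hlt
  have hmem : algStoppingTime f ψ ω ∈ {t : ℕ | 1 ≤ t ∧ ∀ x : ι → Bool,
      (∀ s < t, x (algQuery ψ ω s) = ω (algQuery ψ ω s)) → f x = f ω} := by
    apply Nat.sInf_mem
    refine ⟨Fintype.card ι, by omega, fun x hx => ?_⟩
    congr 1
    funext i
    have hi : i ∈ queried ψ ω (Fintype.card ι) := by
      rw [queried_card hψ]; exact Finset.mem_univ i
    obtain ⟨u, hu, rfl⟩ := Finset.mem_image.1 hi
    exact hx u (Finset.mem_range.1 hu)
  apply hs2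
  intro x hx
  have : f x = f ω := hmem.2 x fun u hu => hx _ (mem_queried (lt_of_lt_of_le hu hlt))
  simp [boolInd, this]

lemma covE_le_influence {w : (ι → Bool) → ℝ} (hw : IsProbWeight w) (f : (ι → Bool) → Bool)
    (i : ι) (h0 : 0 < wProb w (fun ω => ω i = true)) (h1 : wProb w (fun ω => ω i = true) < 1)
    (hc : 0 ≤ covE w (boolInd f) i) : covE w (boolInd f) i ≤ condInfluence w f i := by
  have e1 : wProb w (fun ω => ω i = false) = 1 - wProb w (fun ω => ω i = true) := by
    rw [eq_sub_iff_add_eq, ← hw.2]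
    unfold wProb
    rw [← Finset.sum_add_distrib]
    refine Finset.sum_congr rfl fun ω _ => ?_
    cases hb : ω i <;> simp [hb]
  have e2 : ∑ ω, w ω * boolInd f ω = wProb w (fun ω => f ω = true ∧ ω i = true)
      + wProb w (fun ω => f ω = true ∧ ω i = false) := by
    unfold wProb
    rw [← Finset.sum_add_distrib]
    refine Finset.sum_congr rfl fun ω _ => ?_
    cases hb : ω i <;> cases hf : f ω <;> simp [boolInd, hf, hb]
  have e3 : ∑ ω, w ω * (boolInd f ω * if ω i = true then 1 else 0)
      = wProb w (fun ω => f ω = true ∧ ω i = true) := by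
    unfold wProb
    refine Finset.sum_congr rfl fun ω _ => ?_
    cases hb : ω i <;> cases hf : f ω <;> simp [boolInd, hf, hb]
  have e4 : ∑ ω, w ω * (if ω i = true then (1 : ℝ) else 0) = wProb w (fun ω => ω i = true) := by
    unfold wProb
    refine Finset.sum_congr rfl fun ω _ => ?_
    cases hb : ω i <;> simp [hb]
  unfold covE at hc ⊢
  unfold condInfluence
  rw [e2, e3, e4] at hc ⊢
  rw [e1]
  generalize wProb w (fun ω => ω i = true) = a at *
  generalize wProb w (fun ω => f ω = true ∧ ω i = true) = A at *
  generalize wProb w (fun ω => f ω = true ∧ ω i = false) = B at *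
  have hb : 0 < 1 - a := by linarith
  have hab : 0 < a * (1 - a) := mul_pos h0 hb
  have : A / a - B / (1 - a) = (A - (A + B) * a) / (a * (1 - a)) := by
    field_simp; ring
  rw [this, le_div_iff₀ hab]
  have hle : a * (1 - a) ≤ 1 := by nlinarith
  exact mul_le_of_le_one_right hc hle

end OSSSProof

/-- **OSSS inequality for monotonic measures** (Duminil-Copin–Raoufi–Tassion).  For any
monotonic probability measure `μ` on `{0,1}^n` with `0 < μ[ω_i = 1] < 1` for every `i`,
any increasing boolean function `f` and any decision tree `T` (given by its decision
rule `ψ`), `Var_μ(f) ≤ Σ_i δ_i(T)·Inf_i^μ(f)`. -/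
theorem osss_inequality_monotonic (n : ℕ) (w : (Fin n → Bool) → ℝ)
    (hw : IsProbWeight w) (hmono : IsMonotonic w)
    (hnd : ∀ i : Fin n, 0 < wProb w (fun ω => ω i = true) ∧
      wProb w (fun ω => ω i = true) < 1)
    (f : (Fin n → Bool) → Bool) (hf : IncreasingBoolFun f)
    (ψ : List (Fin n × Bool) → Fin n) (hψ : IsDecisionTree ψ) :
    wVar w (boolInd f) ≤ ∑ i : Fin n, wRevealment w f ψ i * condInfluence w f i := by
  have hF : MonoFun (boolInd f) := by
    intro η η' h
    have := hf η η' h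
    unfold boolInd
    cases h1 : f η <;> cases h2 : f η' <;> rw [h1, h2] at this <;> simp [h1, h2]
    exact absurd this (by decide)
  have F0 : ∀ ω, 0 ≤ boolInd f ω := fun ω => by unfold boolInd; split_ifs <;> norm_num
  have F1 : ∀ ω, boolInd f ω ≤ 1 := fun ω => by unfold boolInd; split_ifs <;> norm_num
  have hT : (treeOf ψ (Fintype.card (Fin n)) []).WF ∅ :=
    treeOf_wf hψ (Fintype.card (Fin n)) 0 (fun _ => false) (by simp)
  have h := var_le_cost hw hmono hF F0 F1 _ hT
  have hvar : wVar w (boolInd f) = ∑ ω, w ω * (boolInd f ω * boolInd f ω)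
      - (∑ ω, w ω * boolInd f ω) ^ 2 := by
    unfold wVar wExp
    generalize hm : ∑ ω, w ω * boolInd f ω = m
    have : ∀ ω, w ω * (boolInd f ω - m) ^ 2 = w ω * (boolInd f ω * boolInd f ω)
        - 2 * m * (w ω * boolInd f ω) + m ^ 2 * w ω := fun ω => by ring
    simp only [this, Finset.sum_add_distrib, Finset.sum_sub_distrib, ← Finset.mul_sum, hm, hw.2]
    ring
  rw [hvar]
  refine h.trans ?_
  have hc : ∀ i, 0 ≤ covE w (boolInd f) i := fun i => covE_nonneg hw hmono hF i
  calc ∑ ω, w ω * pathCost (boolInd f) (covE w (boolInd f))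
        (treeOf ψ (Fintype.card (Fin n)) []) ∅ ω
      ≤ ∑ ω, w ω * ∑ i, (if ∃ t < algStoppingTime f ψ ω, algQuery ψ ω t = i then 1 else 0)
          * covE w (boolInd f) i :=
        sum_le_pos hw fun ω _ => pathCost_le f _ hc ψ hψ ω
    _ = ∑ i, wRevealment w f ψ i * covE w (boolInd f) i := by
        unfold wRevealment wProb
        simp only [Finset.mul_sum, Finset.sum_mul]
        rw [Finset.sum_comm]
        exact Finset.sum_congr rfl fun i _ => Finset.sum_congr rfl fun ω _ => by
          split_ifs <;> ring
    _ ≤ ∑ i, wRevealment w f ψ i * condInfluence w f i := by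
        refine Finset.sum_le_sum fun i _ => mul_le_mul_of_nonneg_left
          (covE_le_influence hw f i (hnd i).1 (hnd i).2 (hc i)) ?_
        unfold wRevealment wProb
        refine Finset.sum_nonneg fun ω _ => mul_nonneg (hw.1 ω) ?_
        split_ifs <;> norm_num
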